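/- (Golan's theorem.) Let A be a commutative semiring with 0 ≠ 1 in which 1 + 1 = 1 (i.e. a nonzero 𝔹-algebra). Then there exists a semiring homomorphism A → 𝔹. -/

import Mathlib

/-!
Golan's theorem: every nonzero 𝔹-algebra (commutative semiring in which `1 + 1 = 1`)
admits a semiring homomorphism to the Boolean semifield 𝔹.  We encode 𝔹 as `Bool`
with `‖` as addition and `&&` as multiplication.
-/

universe u

/-!
Order `A` by `s ≤ t ↔ s + t = t`; then `0` is the least element. A homomorphism to `𝔹` is the
indicator function of the complement of a prime ideal which is a lower set for this order, so it
suffices to see that every *minimal* prime ideal `P` is a lower set. The upper closure `T` of the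
complement of `P` is a submonoid, and `0 ∉ T`, because an element below `0` is `0`. Hence some prime
`Q` is disjoint from `T` (`Ideal.exists_le_prime_disjoint`); as `T` contains the complement of `P`,
`Q ≤ P`, so `Q = P` by minimality, and `P` is disjoint from `T`.
-/

/-- The upper closure of a submonoid for the order `s ≤ t ↔ s + t = t` of an additively idempotent
commutative semiring. -/
def Submonoid.natUpperClosure {A : Type*} [CommSemiring A] (hB : (1 : A) + 1 = 1)
    (S : Submonoid A) : Submonoid A where
  carrier := {t | ∃ s ∈ S, s + t = t}
  one_mem' := ⟨1, S.one_mem, hB⟩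
  mul_mem' := by
    rintro t t' ⟨s, hs, h⟩ ⟨s', hs', h'⟩
    refine ⟨s * s', S.mul_mem hs hs', ?_⟩
    have hidem : s * s' + s * s' = s * s' := by
      rw [← mul_one (s * s'), ← mul_add, hB]
    calc s * s' + t * t' = s * s' + (s + t) * (s' + t') := by rw [h, h']
      _ = (s * s' + s * s') + (s * t' + t * s' + t * t') := by ring
      _ = (s + t) * (s' + t') := by rw [hidem]; ring
      _ = t * t' := by rw [h, h']

/-- A minimal prime of an additively idempotent commutative semiring is a lower set. -/
lemma mem_of_add_mem_of_mem_minimalPrimes {A : Type*} [CommSemiring A] (hB : (1 : A) + 1 = 1)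
    {P : Ideal A} (hP : P ∈ minimalPrimes A) {x y : A} (hxy : x + y ∈ P) : x ∈ P := by
  have hprime : P.IsPrime := hP.1.1
  have hdisj : Disjoint ((⊥ : Ideal A) : Set A) (P.primeCompl.natUpperClosure hB) := by
    rw [Set.disjoint_left]
    rintro t (rfl : t = 0) ⟨s, hs, h⟩
    rw [add_zero] at h
    exact hs (h ▸ P.zero_mem)
  obtain ⟨Q, hQ, -, hQT⟩ := Ideal.exists_le_prime_disjoint _ _ hdisj
  have hidem : ∀ a : A, a + a = a := fun a => by
    rw [← mul_one a, ← mul_add, hB]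
  have hQP : Q ≤ P := fun a ha => by
    by_contra hna
    exact Set.disjoint_left.mp hQT ha ⟨a, hna, hidem a⟩
  have hPQ : P ≤ Q := hP.2 ⟨hQ, bot_le⟩ hQP
  by_contra hx
  exact Set.disjoint_left.mp hQT (hPQ hxy) ⟨x, hx, by rw [← add_assoc, hidem]⟩

/-- **Golan's theorem.** Every nonzero commutative semiring satisfying `1 + 1 = 1`
admits a semiring homomorphism to the Boolean semifield `𝔹 = ({false, true}, ‖, &&)`. -/
theorem golan_exists_hom_to_boolean (A : Type u) [CommSemiring A]
    (hA : (0 : A) ≠ 1) (hB : (1 : A) + 1 = 1) :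
    ∃ f : A → Bool, f 0 = false ∧ f 1 = true ∧
      (∀ x y : A, f (x + y) = (f x || f y)) ∧
      (∀ x y : A, f (x * y) = (f x && f y)) := by
  classical
  have : Nontrivial A := ⟨0, 1, hA⟩
  obtain ⟨P, hP⟩ := Ideal.nonempty_minimalPrimes (I := (⊥ : Ideal A)) bot_ne_top
  have hprime : P.IsPrime := hP.1.1
  have hadd : ∀ x y : A, x + y ∈ P ↔ x ∈ P ∧ y ∈ P := fun x y =>
    ⟨fun h => ⟨mem_of_add_mem_of_mem_minimalPrimes hB hP h,
      mem_of_add_mem_of_mem_minimalPrimes hB hP (add_comm x y ▸ h)⟩,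
      fun h => P.add_mem h.1 h.2⟩
  refine ⟨fun x => decide (x ∉ P), by simp, ?_, fun x y => ?_, fun x y => ?_⟩
  · simpa using (Ideal.ne_top_iff_one P).mp hprime.ne_top
  · simp [hadd]
  · simp [hprime.mul_mem_iff_mem_or_mem]
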